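/- Let d ≥ 2 and let r ≥ 2d+2 be an arbitrary integer (not necessarily prime), N = (d+1)(r−1). Let f : Δ_N → ℝ^d be an affine map on the standard N-simplex whose N+1 vertices are colored with d+2 colors with color classes satisfying |C_0| = … = |C_d| = r−1 and |C_{d+1}| = 1, and suppose the N+1 image points f(v) of the vertices are in general position. If T(f) > 0, then T(f) ≥ 2^{r−2d−1}. -/

import Mathlib

open scoped Classical

/-- A set of points in `ℝ^d` is in *general position* if for every `j < d`,
no `j + 2` of the points lie on a common `j`-dimensional affine subspace. -/
def GenPos (d : ℕ) (P : Set (Fin d → ℝ)) : Prop :=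
  ∀ j < d, ∀ S : Finset (Fin d → ℝ), ↑S ⊆ P → S.card = j + 2 →
    ¬ ∃ A : AffineSubspace ℝ (Fin d → ℝ),
        Module.finrank ℝ A.direction = j ∧ (S : Set (Fin d → ℝ)) ⊆ (A : Set (Fin d → ℝ))

/-- `tverbergCount d N r f c` is the number of unordered colored Tverberg partitions for the
affine map `f` on the standard `N`-simplex (vertex `i` being `Pi.single i 1`), whose vertices
are colored by `c` with `d + 2` colors: partitions of the `N + 1` vertices into `r` rainbow
blocks whose images under `f` have intersecting convex hulls. -/
noncomputable def tverbergCount (d N r : ℕ) (f : (Fin (N + 1) → ℝ) →ᵃ[ℝ] (Fin d → ℝ))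
    (c : Fin (N + 1) → Fin (d + 2)) : ℕ :=
  Set.ncard { P : Finset (Finset (Fin (N + 1))) |
    P.card = r ∧
    (∀ B ∈ P, ∀ B' ∈ P, B ≠ B' → Disjoint B B') ∧
    P.biUnion id = Finset.univ ∧
    (∀ B ∈ P, ∀ j : Fin (d + 2), (B.filter fun i => c i = j).card ≤ 1) ∧
    ∃ x : Fin d → ℝ, ∀ B ∈ P,
      x ∈ convexHull ℝ ((fun i => f (Pi.single i 1)) '' (B : Set (Fin (N + 1)))) }

/-!
Fix a partition with Tverberg point `x`. By Carathéodory's theorem one vertex can be moved so that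
no block uses all `d + 2` colors, and then the singleton color can be merged into another one
without spoiling any rainbow block. Counting vertices, at least `r - d` blocks now have full size
`d + 1` and use each of the `d + 1` remaining colors once.

Any `d + 2` or more full blocks around `x` admit a second partition of their union into as many full
blocks around `x`. After a perturbation moving `x` into the interior of every block, fix a generic
vector `w` and look at the cones from `x` over the blocks: `w` lies in exactly one facet of each
cone. Permute the vertices of each color among the blocks, keeping one color fixed, and count modulo
`2` the choices of a facet containing `w` for each new block. As there are more blocks than colors,
two of the chosen facets are opposite to vertices of the same color, and swapping these two vertices
pairs off the choices; so the count over all permutations is even. The trivial permutation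
contributes one, hence another one contributes an odd number, which forces `x` into all of its
blocks. A limiting argument removes the perturbation.

Some vertex lies in different blocks of two such partitions. Keeping either of these two blocks and
repartitioning the others doubles the count with each full block beyond `d + 1`, which gives
`2 ^ (r - 2 * d - 1)`.
-/

section ParityIdentity

open Finset Equiv

variable {ι κ R : Type*} [Fintype ι] [CommSemiring R] {g : κ → (κ → ι) → R}

lemma prod_mul_mulSingle_swap (hg : ∀ m s t, (∀ j ≠ m, s j = t j) → g m s = g m t)
    {c : ι → κ} {a b : ι} (hab : c a = c b) (σ : κ → Perm ι) :
    ∏ i, g (c i) (fun j => (σ * (Pi.mulSingle (c a) (swap a b) : κ → Perm ι)) j i) =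
      ∏ i, g (c i) (fun j => σ j i) := by
  refine prod_congr rfl fun i _ => hg _ _ _ fun j hj => ?_
  rcases eq_or_ne j (c a) with rfl | hja
  · have hia : i ≠ a := by rintro rfl; exact hj rfl
    have hib : i ≠ b := by rintro rfl; exact hj hab
    simp [swap_apply_of_ne_of_ne hia hib]
  · simp [hja]

lemma prod_mul_const {c : ι → κ} {ρ : Perm ι} (hρ : ∀ i, c (ρ i) = c i) (σ : κ → Perm ι) :
    ∏ i, g (c i) (fun j => (σ * Function.const κ ρ) j i) = ∏ i, g (c i) (fun j => σ j i) := by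
  rw [← Equiv.prod_comp ρ fun i => g (c i) fun j => σ j i]
  simp [hρ]

lemma exists_involution_prod_mul_eq [Nontrivial κ] (k : κ)
    (hg : ∀ m s t, (∀ j ≠ m, s j = t j) → g m s = g m t)
    {c : ι → κ} {a b : ι} (hne : a ≠ b) (hab : c a = c b) :
    ∃ ρ : κ → Perm ι, ρ k = 1 ∧ ρ ≠ 1 ∧ ρ * ρ = 1 ∧ ∀ σ : κ → Perm ι,
      ∏ i, g (c i) (fun j => (σ * ρ) j i) = ∏ i, g (c i) (fun j => σ j i) := by
  have hswap : swap a b ≠ 1 := by simpa [swap_eq_one_iff] using hne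
  rcases eq_or_ne k (c a) with rfl | hk
  · obtain ⟨j, hj⟩ := exists_ne (c a)
    have hc : ∀ i, c (swap a b i) = c i := fun i => by
      rw [swap_apply_def]; split_ifs <;> simp_all
    refine ⟨Pi.mulSingle (c a) (swap a b) * Function.const κ (swap a b), by simp,
      fun h => hswap (by simpa [hj] using congrFun h j), ?_, fun σ => ?_⟩
    · ext1 m
      rcases eq_or_ne m (c a) with rfl | hm
      · simp
      · simp [hm]
    · rw [← mul_assoc, prod_mul_const hc, prod_mul_mulSingle_swap hg hab]
  · exact ⟨Pi.mulSingle (c a) (swap a b), by simp [hk], by simpa using hswap,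
      by rw [← Pi.mulSingle_mul]; simp, prod_mul_mulSingle_swap hg hab⟩

theorem sum_prod_sum_eq_zero [Fintype κ] [Nontrivial κ] [CharP R 2]
    (hκ : Fintype.card κ < Fintype.card ι) (k : κ)
    (hg : ∀ m s t, (∀ j ≠ m, s j = t j) → g m s = g m t) :
    ∑ σ : κ → Perm ι with σ k = 1, ∏ i, ∑ m, g m (fun j => σ j i) = 0 := by
  simp_rw [prod_univ_sum]
  rw [sum_comm]
  refine sum_eq_zero fun c _ => ?_
  obtain ⟨a, b, hne, hab⟩ := Fintype.exists_ne_map_eq_of_card_lt c hκ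
  obtain ⟨ρ, hρk, hρ1, hρρ, hρ⟩ := exists_involution_prod_mul_eq k hg hne hab
  refine sum_involution (fun σ _ => σ * ρ) (fun σ _ => ?_) (fun σ _ _ => by simpa using hρ1)
    (fun σ hσ => by simpa [hρk] using hσ) (fun σ _ => by rw [mul_assoc, hρρ, mul_one])
  rw [hρ, CharTwo.add_self_eq_zero]

end ParityIdentity

section FacetParity

open Finset Module

variable {K E κ : Type*} [Field K] [AddCommGroup E] [Module K E] {L : (κ → K) →ₗ[K] E} {w : E}

/-- The right-hand side `w` is *generic* for the linear system `L l = w` if no solution has two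
vanishing coordinates. -/
def IsGenericFor (L : (κ → K) →ₗ[K] E) (w : E) : Prop :=
  ∀ ⦃l : κ → K⦄, L l = w → ∀ ⦃i j : κ⦄, l i = 0 → l j = 0 → i = j

lemma IsGenericFor.eq_zero_of_map_eq_zero (hw : IsGenericFor L w) {l n : κ → K} {i : κ}
    (hl : L l = w) (hli : l i = 0) (hn : L n = 0) (hni : n i = 0) : n = 0 := by
  by_contra h
  obtain ⟨j, hj : n j ≠ 0⟩ := Function.ne_iff.1 h
  have hzero : L (l + (-(l j / n j)) • n) = w := by simp [hl, hn]
  have hij : i = j := hw hzero (by simp [hli, hni]) (by simp [hj])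
  exact hj (hij ▸ hni)

lemma IsGenericFor.eq_add_smul (hw : IsGenericFor L w) {l l' n : κ → K} {i : κ}
    (hl : L l = w) (hli : l i = 0) (hl' : L l' = w) (hn : L n = 0) (hni : n i = 1) :
    l' = l + l' i • n := by
  have := hw.eq_zero_of_map_eq_zero (n := l' - (l + l' i • n)) hl hli (by simp [hl, hl', hn])
    (by simp [hli, hni])
  exact sub_eq_zero.1 this

lemma exists_isGenericFor [Infinite K] [Fintype κ] {A : Type*} [Finite A]
    (hκ : Fintype.card κ ≤ finrank K E + 1) (v : A → κ → E) :
    ∃ w, ∀ a, IsGenericFor (Fintype.linearCombination K (v a)) w := by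
  have := Fintype.ofFinite A
  let W (p : A × κ × κ) : Submodule K E :=
    Submodule.span K (((univ.erase p.2.1).erase p.2.2).image (v p.1) : Finset E)
  have hW : ∀ p : A × κ × κ, p.2.1 ≠ p.2.2 → W p ≠ ⊤ := by
    rintro ⟨a, i, j⟩ hij htop
    have hlt : finrank K (W (a, i, j)) < finrank K E := by
      refine (finrank_span_finset_le_card _).trans_lt (card_image_le.trans_lt ?_)
      have : 1 < Fintype.card κ := Fintype.one_lt_card_iff.2 ⟨i, j, hij⟩
      rw [card_erase_of_mem (by simpa using hij.symm), card_erase_of_mem (mem_univ _), card_univ]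
      omega
    rw [htop, finrank_top] at hlt
    exact hlt.false
  have htop : ⊤ ∉ ({p | p.2.1 ≠ p.2.2} : Finset (A × κ × κ)).image W := by
    simpa using fun a i j hij => hW (a, i, j) hij
  obtain ⟨w, hw⟩ := (Set.ne_univ_iff_exists_notMem _).1
    (Subspace.biUnion_ne_univ_of_top_notMem htop)
  refine ⟨w, fun a l hl i j hli hlj => by_contra fun hij => hw ?_⟩
  refine Set.mem_biUnion (mem_image_of_mem W (a := (a, i, j)) (by simpa using hij)) ?_
  rw [SetLike.mem_coe, ← hl, Fintype.linearCombination_apply]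
  refine Submodule.sum_mem _ fun k _ => ?_
  rcases eq_or_ne k i with rfl | hki
  · simp [hli]
  rcases eq_or_ne k j with rfl | hkj
  · simp [hlj]
  exact Submodule.smul_mem _ _ (Submodule.subset_span (by
    simpa using ⟨k, ⟨hki, hkj⟩, rfl⟩))

variable [LinearOrder K]

/-- `w` lies in the facet opposite to `i` of the image under `L` of the nonnegative orthant, that
is, in the cone spanned by the images of the standard basis vectors other than the `i`-th one. -/
def MemFacet (L : (κ → K) →ₗ[K] E) (w : E) (i : κ) : Prop :=
  ∃ l : κ → K, 0 ≤ l ∧ L l = w ∧ l i = 0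

lemma memFacet_linearCombination_congr [Fintype κ] {v v' : κ → E} {i : κ}
    (h : ∀ j ≠ i, v j = v' j) :
    MemFacet (Fintype.linearCombination K v) w i ↔
      MemFacet (Fintype.linearCombination K v') w i := by
  refine exists_congr fun l => and_congr_right fun _ => and_congr_left fun hli => ?_
  suffices Fintype.linearCombination K v l = Fintype.linearCombination K v' l by rw [this]
  simp only [Fintype.linearCombination_apply]
  refine sum_congr rfl fun j _ => ?_
  rcases eq_or_ne j i with rfl | hj
  · simp [hli]
  · rw [h j hj]

variable [IsStrictOrderedRing K]

lemma exists_forall_neg_nonneg_add_mul [Finite κ] (l : κ → K) {n : κ → K} (hn : ∃ j, n j < 0) :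
    ∃ (t : K) (j : κ), n j < 0 ∧ l j + t * n j = 0 ∧ ∀ k, n k < 0 → 0 ≤ l k + t * n k := by
  have := Fintype.ofFinite κ
  obtain ⟨j, hj, hmin⟩ := exists_min_image {j | n j < 0} (fun j => l j / -n j)
    (by simpa [Finset.Nonempty] using hn)
  simp only [mem_filter, mem_univ, true_and] at hj hmin
  refine ⟨l j / -n j, j, hj, by have := hj.ne; field_simp; ring, fun k hk => ?_⟩
  have := hmin k hk
  rw [le_div_iff₀ (by linarith)] at this
  linarith

/-- The solutions of `L l = w` form a line; it leaves the orthant exactly once in each direction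
as soon as its direction `n` takes both signs. -/
lemma IsGenericFor.exists_memFacet_iff_of_neg [Finite κ] (hw : IsGenericFor L w) {n : κ → K}
    {i : κ} (hi : MemFacet L w i) (hn : L n = 0) (hni : n i = 1) (hneg : ∃ j, n j < 0) :
    ∃ j ≠ i, ∀ a, MemFacet L w a ↔ a = i ∨ a = j := by
  obtain ⟨l, hl0, hl, hli⟩ := hi
  obtain ⟨t, j, hj, htj, hmin⟩ := exists_forall_neg_nonneg_add_mul l hneg
  have hji : j ≠ i := by rintro rfl; linarith
  have hlpos : ∀ a ≠ i, 0 < l a := fun a ha =>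
    (hl0 a).lt_of_ne fun h => ha (hw hl h.symm hli)
  have ht : 0 < t := by nlinarith [hlpos j hji]
  have hend : MemFacet L w j := by
    refine ⟨l + t • n, fun a => ?_, by simp [hl, hn], by simpa using htj⟩
    rcases lt_or_ge (n a) 0 with ha | ha
    · simpa using hmin a ha
    · simpa using add_nonneg (hl0 a) (mul_nonneg ht.le ha)
  refine ⟨j, hji, fun a => ⟨?_, ?_⟩⟩
  · rintro ⟨l', hl'0, hl', hl'a⟩
    by_contra! ha
    have hline := hw.eq_add_smul hl hli hl' hn hni
    have hl'_apply : ∀ k, l' k = l k + l' i * n k := fun k => by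
      simpa using congrFun hline k
    have hl'i : 0 ≤ l' i := hl'0 i
    have hla := hlpos a ha.1
    have ha0 := hl'_apply a
    have hna : n a < 0 := by
      by_contra! h
      nlinarith [mul_nonneg hl'i h]
    have htle : t ≤ l' i := by nlinarith [hmin a hna]
    have hl'j : l' j = 0 := le_antisymm (by rw [hl'_apply]; nlinarith) (hl'0 j)
    exact ha.2 (hw hl' hl'a hl'j)
  · rintro (rfl | rfl)
    exacts [⟨l, hl0, hl, hli⟩, hend]

lemma IsGenericFor.even_card_memFacet [Fintype κ] [FiniteDimensional K E]
    (hw : IsGenericFor L w) (hκ : finrank K E < Fintype.card κ)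
    (hker : ∀ n, 0 ≤ n → L n = 0 → n = 0) : Even #{i | MemFacet L w i} := by
  rcases eq_empty_or_nonempty ({i | MemFacet L w i} : Finset κ) with h | ⟨i, hi⟩
  · simp [h]
  obtain ⟨l, -, hl, hli⟩ := (mem_filter.1 hi).2
  obtain ⟨m, hm, hm0⟩ := L.ker.exists_mem_ne_zero_of_ne_bot
    (LinearMap.ker_ne_bot_of_finrank_lt (by simpa using hκ))
  rw [LinearMap.mem_ker] at hm
  have hmi : m i ≠ 0 := fun h => hm0 (hw.eq_zero_of_map_eq_zero hl hli hm h)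
  have hneg : ∃ j, ((m i)⁻¹ • m) j < 0 := by
    by_contra! h
    exact hm0 (by simpa [hmi] using hker _ h (by simp [hm]))
  obtain ⟨j, hji, hj⟩ := hw.exists_memFacet_iff_of_neg (mem_filter.1 hi).2
    (n := (m i)⁻¹ • m) (by simp [hm]) (by simp [hmi]) hneg
  have hpair : ({a | MemFacet L w a} : Finset κ) = {i, j} := by ext a; simp [hj]
  rw [hpair, card_pair hji.symm]
  exact even_two

/-- Along a positive direction the line of solutions enters the orthant once and never leaves. -/
lemma IsGenericFor.existsUnique_memFacet [Finite κ] [Nonempty κ] (hw : IsGenericFor L w)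
    (hL : Function.Surjective L) {n : κ → K} (hn : L n = 0) (hpos : ∀ j, 0 < n j) :
    ∃! i, MemFacet L w i := by
  obtain ⟨q, hq⟩ := hL w
  obtain ⟨t, i, -, hti, hmin⟩ := exists_forall_neg_nonneg_add_mul q (n := -n)
    ⟨Classical.arbitrary κ, by simpa using hpos _⟩
  have hmem : MemFacet L w i := ⟨q + t • -n, fun k => by simpa using hmin k (by simpa using hpos k),
    by simp [hq, hn], by simpa using hti⟩
  obtain ⟨l, hl0, hl, hli⟩ := id hmem
  refine ⟨i, hmem, fun a => ?_⟩
  rintro ⟨l', hl'0, hl', hl'a⟩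
  have hline := hw.eq_add_smul hl hli hl' (n := (n i)⁻¹ • n) (by simp [hn])
    (by simp [(hpos i).ne'])
  have ha : l' a = l a + l' i * ((n i)⁻¹ * n a) := by simpa using congrFun hline a
  have hshift : 0 ≤ l' i * ((n i)⁻¹ * n a) :=
    mul_nonneg (hl'0 i) (mul_nonneg (inv_nonneg.2 (hpos i).le) (hpos a).le)
  exact hw hl (le_antisymm (by linarith) (hl0 a)) hli

/-- For a generic `w`, count the pairs of a reassignment `σ` and a choice, for each row, of a facet
of the cone of that row containing `w`: the total is even, and the identity contributes exactly
one. -/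
theorem exists_ne_one_forall_exists_nonneg_map_eq_zero {ι : Type*} [Fintype ι]
    [Fintype κ] [Nontrivial κ] [FiniteDimensional K E] (hκE : Fintype.card κ = finrank K E + 1)
    (hκ : Fintype.card κ < Fintype.card ι) (k : κ) (u : ι → κ → E)
    (hspan : ∀ i, Submodule.span K (Set.range (u i)) = ⊤)
    (hpos : ∀ i, ∃ n : κ → K, (∀ j, 0 < n j) ∧ Fintype.linearCombination K (u i) n = 0) :
    ∃ σ : κ → Equiv.Perm ι, σ k = 1 ∧ σ ≠ 1 ∧ ∀ i, ∃ n : κ → K, 0 ≤ n ∧ n ≠ 0 ∧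
      Fintype.linearCombination K (fun j => u (σ j i) j) n = 0 := by
  obtain ⟨w, hw⟩ := exists_isGenericFor (K := K) hκE.le fun (s : κ → ι) j => u (s j) j
  have hsum := sum_prod_sum_eq_zero hκ k (R := ZMod 2)
    (g := fun m s => if MemFacet (Fintype.linearCombination K fun j => u (s j) j) w m then 1 else 0)
    fun m s t hst => by
      simp only [memFacet_linearCombination_congr fun j hj => congrArg (u · j) (hst j hj)]
  simp only [sum_boole] at hsum
  by_contra! hnone
  rw [sum_eq_single 1, prod_eq_one] at hsum
  · exact one_ne_zero hsum
  · intro i _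
    obtain ⟨n, hn, hn0⟩ := hpos i
    have hsurj : Function.Surjective (Fintype.linearCombination K (u i)) := by
      rw [← LinearMap.range_eq_top, Fintype.range_linearCombination, hspan]
    have hone := (hw fun _ => i).existsUnique_memFacet hsurj hn0 hn
    rw [Fintype.existsUnique_iff_card_one] at hone
    refine (congrArg Nat.cast ?_).trans Nat.cast_one
    convert hone
    rfl
  · intro σ hσ hσ1
    obtain ⟨i, hi⟩ := hnone σ (mem_filter.1 hσ).2 hσ1
    refine prod_eq_zero (mem_univ i) ((ZMod.natCast_eq_zero_iff_even).2 ?_)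
    refine (hw fun j => σ j i).even_card_memFacet (by omega) fun n hn hn0 => ?_
    exact by_contra fun h => hi n hn h hn0
  · simp

end FacetParity

section ConvexHullRange

open Set Module

variable {K E κ : Type*} [Field K] [AddCommGroup E] [Module K E] {v : κ → E} {x : E}

lemma span_range_add_const_eq_top (hv : affineSpan K (range v) = ⊤) (b : E) :
    Submodule.span K (range fun j => v j + b) = ⊤ := by
  have hmap : affineSpan K (range fun j => v j + b) = ⊤ := by
    have := (AffineEquiv.vaddConst K b).span_eq_top_iff.1 hv
    rwa [← range_comp] at this
  refine eq_top_iff.2 fun z _ => affineSpan_le_toAffineSubspace_span (k := K) ?_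
  rw [hmap]
  trivial

variable [Fintype κ]

lemma linearCombination_sub_const (l : κ → K) :
    Fintype.linearCombination K (fun j => v j - x) l =
      Fintype.linearCombination K v l - (∑ j, l j) • x := by
  simp [Fintype.linearCombination_apply, smul_sub, Finset.sum_smul]

variable [LinearOrder K] [IsStrictOrderedRing K]

lemma mem_convexHull_range_iff :
    x ∈ convexHull K (range v) ↔ ∃ l ∈ stdSimplex K κ, Fintype.linearCombination K v l = x := by
  have : range v = Fintype.linearCombination K v '' range fun i => Pi.single i 1 := by
    rw [← range_comp]; congr 1; ext; simp
  rw [this, ← LinearMap.image_convexHull, convexHull_rangle_single_eq_stdSimplex, mem_image]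

lemma mem_convexHull_range_of_linearCombination_sub_eq_zero {n : κ → K} (hn : 0 ≤ n)
    (hn0 : n ≠ 0) (hsum : Fintype.linearCombination K (fun j => v j - x) n = 0) :
    x ∈ convexHull K (range v) := by
  have hpos : 0 < ∑ j, n j :=
    (Finset.sum_nonneg fun j _ => hn j).lt_of_ne' fun h =>
      hn0 ((Fintype.sum_eq_zero_iff_of_nonneg hn).1 h)
  rw [linearCombination_sub_const, sub_eq_zero] at hsum
  refine mem_convexHull_range_iff.2 ⟨(∑ j, n j)⁻¹ • n,
    ⟨fun j => mul_nonneg (inv_nonneg.2 hpos.le) (hn j), ?_⟩, ?_⟩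
  · simp [← Finset.mul_sum, hpos.ne']
  · rw [map_smul, hsum, inv_smul_smul₀ hpos.ne']

/-- Translating the points along `x - β`, where `β` is their barycentre, moves `x` from their convex
hull to its relative interior. -/
lemma exists_forall_pos_linearCombination_translate_eq_zero [Nonempty κ]
    (hx : x ∈ convexHull K (range v)) :
    ∃ b : E, ∀ ε ∈ Ioc (0 : K) 1, ∃ n : κ → K, (∀ j, 0 < n j) ∧
      Fintype.linearCombination K (fun j => v j + ε • b - x) n = 0 := by
  obtain ⟨l, ⟨hl0, hl1⟩, hlx⟩ := mem_convexHull_range_iff.1 hx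
  have hcard : (0 : K) < Fintype.card κ := by exact_mod_cast Fintype.card_pos
  refine ⟨x - (Fintype.card κ : K)⁻¹ • ∑ j, v j, fun ε hε =>
    ⟨fun j => (1 - ε) * l j + ε * (Fintype.card κ : K)⁻¹, fun j =>
      add_pos_of_nonneg_of_pos (mul_nonneg (sub_nonneg.2 hε.2) (hl0 j))
        (mul_pos hε.1 (inv_pos.2 hcard)), ?_⟩⟩
  have hsum : ∑ j, ((1 - ε) * l j + ε * (Fintype.card κ : K)⁻¹) = 1 := by
    rw [Finset.sum_add_distrib, ← Finset.mul_sum, hl1]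
    simp; field_simp; ring
  rw [Fintype.linearCombination_apply] at hlx
  rw [linearCombination_sub_const, hsum, Fintype.linearCombination_apply]
  simp only [smul_add, Finset.sum_add_distrib, ← Finset.sum_smul, hsum]
  simp only [add_smul, mul_smul, Finset.sum_add_distrib, ← Finset.smul_sum, hlx]
  module

end ConvexHullRange

section ColorfulReassignment

open Set Module

lemma isClosed_setOf_mem_convexHull_range {T E κ : Type*} [TopologicalSpace T] [AddCommGroup E]
    [Module ℝ E] [TopologicalSpace E] [ContinuousAdd E] [ContinuousSMul ℝ E] [T1Space E]
    [Finite κ] {F : T → κ → E} (hF : Continuous F) (x : E) :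
    IsClosed {t | x ∈ convexHull ℝ (range (F t))} := by
  have := Fintype.ofFinite κ
  have hclosed : IsClosed {p : T × stdSimplex ℝ κ | ∑ j, p.2.1 j • F p.1 j = x} := by
    refine isClosed_singleton.preimage (continuous_finsetSum _ fun j _ => ?_)
    exact ((continuous_apply j).comp (continuous_subtype_val.comp continuous_snd)).smul
      ((continuous_apply j).comp (hF.comp continuous_fst))
  convert isClosedMap_fst_of_compactSpace _ hclosed
  ext t
  simp [mem_convexHull_range_iff, Fintype.linearCombination_apply]

variable {E ι κ : Type*} [NormedAddCommGroup E] [NormedSpace ℝ E] [FiniteDimensional ℝ E]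
  [Fintype ι] [Fintype κ] [Nontrivial κ]

theorem exists_ne_one_forall_mem_convexHull (hκE : Fintype.card κ = finrank ℝ E + 1)
    (hκ : Fintype.card κ < Fintype.card ι) (k : κ) {u : ι → κ → E} {x : E}
    (hspan : ∀ i, affineSpan ℝ (range (u i)) = ⊤) (hx : ∀ i, x ∈ convexHull ℝ (range (u i))) :
    ∃ σ : κ → Equiv.Perm ι, σ k = 1 ∧ σ ≠ 1 ∧
      ∀ i, x ∈ convexHull ℝ (range fun j => u (σ j i) j) := by
  choose b hb using fun i => exists_forall_pos_linearCombination_translate_eq_zero (hx i)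
  let good (σ : κ → Equiv.Perm ι) : Set ℝ :=
    {ε | ∀ i, x ∈ convexHull ℝ (range fun j => u (σ j i) j + ε • b (σ j i))}
  have hclosed : IsClosed (⋃ σ ∈ {σ : κ → Equiv.Perm ι | σ k = 1 ∧ σ ≠ 1}, good σ) := by
    refine (toFinite _).isClosed_biUnion fun σ _ => ?_
    simp only [good, ofPred_forall]
    exact isClosed_iInter fun i => isClosed_setOf_mem_convexHull_range (by fun_prop) x
  have hsub : Ioc 0 1 ⊆ ⋃ σ ∈ {σ : κ → Equiv.Perm ι | σ k = 1 ∧ σ ≠ 1}, good σ := by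
    intro ε hε
    obtain ⟨σ, hσk, hσ1, hσ⟩ := exists_ne_one_forall_exists_nonneg_map_eq_zero hκE hκ k
      (fun i j => u i j + ε • b i - x)
      (fun i => by
        simpa only [add_sub_assoc] using span_range_add_const_eq_top (hspan i) (ε • b i - x))
      fun i => hb i ε hε
    refine mem_biUnion (x := σ) ⟨hσk, hσ1⟩ fun i => ?_
    obtain ⟨n, hn, hn0, hsum⟩ := hσ i
    exact mem_convexHull_range_of_linearCombination_sub_eq_zero hn hn0 hsum
  have hzero : (0 : ℝ) ∈ closure (Ioc 0 1) := by simp [closure_Ioc]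
  obtain ⟨σ, ⟨hσk, hσ1⟩, hσ⟩ := mem_iUnion₂.1 (closure_minimal hsub hclosed hzero)
  exact ⟨σ, hσk, hσ1, fun i => by simpa using hσ i⟩

end ColorfulReassignment

section ReplaceParts

open Finset

variable {V : Type*} [DecidableEq V] {S : Finset V}

/-- The partition obtained from `P` by repartitioning the union of the parts in `p` as prescribed
by `Q`. -/
@[simps]
def replaceParts (P : Finpartition S) {p : Finset (Finset V)} (hp : p ⊆ P.parts)
    (Q : Finpartition (p.sup id)) : Finpartition S where
  parts := Q.parts ∪ (P.parts \ p)
  supIndep := by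
    rw [supIndep_iff_pairwiseDisjoint, coe_union, Set.pairwiseDisjoint_union]
    refine ⟨Q.disjoint, P.disjoint.subset (by simp), fun A hA B hB _ => ?_⟩
    rw [mem_coe, mem_sdiff] at hB
    exact ((P.supIndep hp hB.1 hB.2).mono_right (Q.le hA)).symm
  sup_parts := by
    rw [sup_union, Q.sup_parts, ← sup_union, union_sdiff_of_subset hp, P.sup_parts]
  bot_notMem := by simp

variable {P : Finpartition S} {p : Finset (Finset V)}

lemma disjoint_parts_sdiff (hp : p ⊆ P.parts) (Q : Finpartition (p.sup id)) :
    Disjoint Q.parts (P.parts \ p) := by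
  refine disjoint_left.2 fun B hBQ hB => Q.ne_bot hBQ ?_
  rw [mem_sdiff] at hB
  exact (P.supIndep hp hB.1 hB.2).eq_bot_of_le (Q.le hBQ)

lemma card_parts_replaceParts (hp : p ⊆ P.parts) {Q : Finpartition (p.sup id)}
    (hQ : #Q.parts = #p) : #(replaceParts P hp Q).parts = #P.parts := by
  rw [replaceParts_parts, card_union_of_disjoint (disjoint_parts_sdiff hp Q), hQ, add_comm,
    card_sdiff_add_card_eq_card hp]

lemma replaceParts_injective (hp : p ⊆ P.parts) : Function.Injective (replaceParts P hp) := by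
  intro Q Q' h
  ext1
  rw [← union_sdiff_cancel_right (disjoint_parts_sdiff hp Q),
    ← union_sdiff_cancel_right (disjoint_parts_sdiff hp Q')]
  exact congrArg (fun R : Finpartition S => R.parts \ (P.parts \ p)) h

lemma card_finpartition_sup_le {good : Finset V → Prop} [DecidablePred good] (hp : p ⊆ P.parts)
    (hgood : ∀ B ∈ P.parts \ p, good B) :
    #{Q : Finpartition (p.sup id) | #Q.parts = #p ∧ ∀ B ∈ Q.parts, good B} ≤
      #{Q : Finpartition S | (#Q.parts = #P.parts ∧ ∀ B ∈ Q.parts, good B) ∧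
        P.parts \ p ⊆ Q.parts} := by
  refine card_le_card_of_injOn (replaceParts P hp) (fun Q hQ => ?_)
    (replaceParts_injective hp).injOn
  simp only [coe_filter, Set.mem_ofPred_eq, mem_univ, true_and] at hQ ⊢
  refine ⟨⟨card_parts_replaceParts hp hQ.1, fun B hB => ?_⟩, subset_union_right⟩
  exact (mem_union.1 hB).elim (hQ.2 B) (hgood B)

/-- Branch on the two different parts that `P` and its companion `Q` assign to some `v`. -/
lemma two_pow_le_card_finpartition {good : Finset V → Prop} [DecidablePred good] {n : ℕ}
    (hcompanion : ∀ {S : Finset V} (P : Finpartition S), (∀ B ∈ P.parts, good B) →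
      n < #P.parts → ∃ Q : Finpartition S, Q ≠ P ∧ #Q.parts = #P.parts ∧ ∀ B ∈ Q.parts, good B)
    (P : Finpartition S) (hP : ∀ B ∈ P.parts, good B) :
    2 ^ (#P.parts - n) ≤
      #{Q : Finpartition S | #Q.parts = #P.parts ∧ ∀ B ∈ Q.parts, good B} := by
  induction hk : #P.parts - n generalizing S with
  | zero => exact card_pos.2 ⟨P, by simpa using hP⟩
  | succ k ih =>
    obtain ⟨Q, hQP, hcard, hQ⟩ := hcompanion P hP (by omega)
    let F : Finset (Finpartition S) :=
      {R : Finpartition S | #R.parts = #P.parts ∧ ∀ B ∈ R.parts, good B}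
    have hbranch : ∀ R ∈ F, ∀ A ∈ R.parts, 2 ^ k ≤ #{R' ∈ F | A ∈ R'.parts} := by
      intro R hR A hA
      rw [mem_filter] at hR
      have hk' : #(R.parts.erase A) - n = k := by rw [card_erase_of_mem hA]; omega
      refine (ih (R.ofSubset (erase_subset A _) rfl) (fun B hB => hR.2.2 B (mem_of_mem_erase hB))
        hk').trans ((card_finpartition_sup_le (erase_subset A _) fun B hB =>
          hR.2.2 B (mem_sdiff.1 hB).1).trans (card_le_card fun R' hR' => ?_))
      simpa [F, hR.2.1, sdiff_erase_self hA] using hR'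
    obtain ⟨A, hA⟩ : (P.parts \ Q.parts).Nonempty := by
      rw [sdiff_nonempty]
      exact fun h => hQP (Finpartition.ext (eq_of_subset_of_card_le h hcard.le).symm)
    rw [mem_sdiff] at hA
    obtain ⟨v, hv⟩ := P.nonempty_of_mem_parts hA.1
    obtain ⟨A', hA', hv'⟩ := Q.exists_mem (P.subset hA.1 hv)
    have hdisj : Disjoint {R ∈ F | A ∈ R.parts} {R ∈ F | A' ∈ R.parts} := by
      refine disjoint_left.2 fun R hR hR' => hA.2 ?_
      rw [mem_filter] at hR hR'
      rwa [R.eq_of_mem_parts hR.2 hR'.2 hv hv']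
    calc 2 ^ (k + 1) = 2 ^ k + 2 ^ k := by ring
      _ ≤ #{R ∈ F | A ∈ R.parts} + #{R ∈ F | A' ∈ R.parts} :=
        add_le_add (hbranch P (by simpa [F] using hP) A hA.1)
          (hbranch Q (by simpa [F] using ⟨hcard, hQ⟩) A' hA')
      _ ≤ #F := by
        rw [← card_union_of_disjoint hdisj]
        exact card_le_card (union_subset (filter_subset _ _) (filter_subset _ _))

end ReplaceParts

section Shuffle

open Finset

variable {V κ : Type*} [DecidableEq V] [Fintype κ] {S : Finset V} {P : Finpartition S} {c : V → κ}

lemma exists_enumeration_of_injOn (hP : ∀ B ∈ P.parts, Set.InjOn c B ∧ #B = Fintype.card κ) :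
    ∃ e : P.parts → κ → V, (∀ B j, c (e B j) = j) ∧ ∀ B, univ.image (e B) = B := by
  have hex : ∀ (B : P.parts) (j : κ), ∃ v ∈ B.1, c v = j := fun B j => by
    have himage : B.1.image c = univ :=
      eq_univ_of_card _ ((card_image_of_injOn (hP B B.2).1).trans (hP B B.2).2)
    exact mem_image.1 (himage ▸ mem_univ j)
  choose e he hce using hex
  refine ⟨e, hce, fun B => eq_of_subset_of_card_le (by simpa [subset_iff] using he B) ?_⟩
  rw [card_image_of_injective _ (Function.LeftInverse.injective (hce B)), (hP B B.2).2, card_univ]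

lemma exists_finpartition_shuffle [Nonempty κ] {e : P.parts → κ → V} (hc : ∀ B j, c (e B j) = j)
    (he : ∀ B, univ.image (e B) = B) (σ : κ → Equiv.Perm P.parts) :
    ∃ Q : Finpartition S, #Q.parts = #P.parts ∧
      Q.parts = univ.image fun B => univ.image fun j => e (σ j B) j := by
  have hmem : ∀ B j, e B j ∈ B.1 := fun B j => (he B).subset (mem_image_of_mem _ (mem_univ j))
  have huniq : ∀ {B B' j j'}, e (σ j B) j = e (σ j' B') j' → B = B' := by
    intro B B' j j' h
    obtain rfl : j = j' := by simpa [hc] using congrArg c h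
    exact (σ j).injective (Subtype.ext (P.eq_of_mem_parts (σ j B).2 (σ j B').2 (hmem _ j)
      (h ▸ hmem _ j)))
  refine ⟨Finpartition.ofExistsUnique (univ.image fun B => univ.image fun j => e (σ j B) j)
    ?_ ?_ ?_, ?_, rfl⟩
  · simp only [mem_image, mem_univ, true_and, forall_exists_index, forall_apply_eq_imp_iff,
      subset_iff]
    exact fun B j => P.subset (σ j B).2 (hmem _ j)
  · intro v hv
    obtain ⟨A, hA, hvA⟩ := P.exists_mem hv
    obtain ⟨j, -, rfl⟩ := mem_image.1 ((he ⟨A, hA⟩).superset hvA)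
    refine ⟨univ.image fun i => e (σ i ((σ j)⁻¹ ⟨A, hA⟩)) i,
      ⟨by simp, mem_image.2 ⟨j, mem_univ j, by simp⟩⟩, ?_⟩
    simp only [mem_image, mem_univ, true_and, and_imp, forall_exists_index, forall_apply_eq_imp_iff]
    intro B i hi
    obtain rfl : B = (σ j)⁻¹ ⟨A, hA⟩ := huniq (j' := j) (by simpa using hi)
    rfl
  · simp [univ_nonempty.ne_empty]
  · refine (card_image_of_injective _ fun B B' h => ?_).trans (by simp)
    obtain ⟨j'⟩ := ‹Nonempty κ›
    obtain ⟨j, -, hj⟩ := mem_image.1 (h.subset (mem_image_of_mem _ (mem_univ j')))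
    exact (huniq hj).symm

lemma eq_one_of_shuffle_eq {e : P.parts → κ → V} (he : ∀ B, univ.image (e B) = B)
    {σ : κ → Equiv.Perm P.parts} {k : κ} (hσ : σ k = 1)
    (hP : ∀ B, (univ.image fun j => e (σ j B) j) ∈ P.parts) : σ = 1 := by
  have hmem : ∀ B j, e B j ∈ B.1 := fun B j => (he B).subset (mem_image_of_mem _ (mem_univ j))
  ext1 j
  ext1 B
  have hrow : ∀ i, (univ.image fun j => e (σ j B) j) = (σ i B).1 := fun i =>
    P.eq_of_mem_parts (hP B) (σ i B).2 (mem_image_of_mem _ (mem_univ i)) (hmem _ i)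
  exact Subtype.ext (by rw [← hrow j, hrow k, hσ]; rfl)

end Shuffle

section ColoredBlock

open Finset Module

lemma card_add_card_le_card_of_injOn {V C : Type*} [Fintype C] {c : V → C} {B : Finset V}
    (hc : Set.InjOn c B) {T : Finset C} (hT : ∀ v ∈ B, c v ∉ T) : #B + #T ≤ Fintype.card C := by
  rw [← card_image_of_injOn hc, ← card_union_of_disjoint]
  · exact card_le_univ _
  · exact disjoint_left.2 fun j hj => by obtain ⟨v, hv, rfl⟩ := mem_image.1 hj; exact hT v hv

lemma exists_mem_convexHull_image_erase {K V E : Type*} [Field K] [LinearOrder K]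
    [IsStrictOrderedRing K] [AddCommGroup E] [Module K E] [FiniteDimensional K E] [DecidableEq V]
    {y : V → E} {x : E} {B : Finset V} (hB : finrank K E + 1 < #B)
    (hx : x ∈ convexHull K (y '' B)) :
    ∃ v ∈ B, x ∈ convexHull K (y '' (B.erase v)) := by
  rw [convexHull_eq_union] at hx
  simp only [Set.mem_iUnion] at hx
  obtain ⟨t, ht, hind, hxt⟩ := hx
  have : Nonempty V := (card_pos.1 (Nat.zero_lt_of_lt hB)).to_type
  choose! g hgB hgy using show ∀ z ∈ t, ∃ v ∈ B, y v = z from fun z hz => ht hz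
  have hcard : #(t.image g) < #B := by
    have := hind.card_le_finrank_succ
    rw [Fintype.card_coe] at this
    have := Submodule.finrank_le (vectorSpan K (Set.range ((↑) : t → E)))
    have := card_image_le (s := t) (f := g)
    omega
  obtain ⟨v, hvB, hv⟩ := exists_mem_notMem_of_card_lt_card hcard
  have hsub : (t : Set E) ⊆ y '' (B.erase v) := fun z hz =>
    ⟨g z, mem_erase.2 ⟨fun h => hv (h ▸ mem_image_of_mem g hz), hgB z hz⟩, hgy z hz⟩
  exact ⟨v, hvB, convexHull_mono hsub hxt⟩

variable {V C E : Type*} [AddCommGroup E] [Module ℝ E] {y : V → E} {c : V → C} {x : E}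

/-- `B` is a block of a colored Tverberg partition with Tverberg point `x`: the vertices of `B`
have distinct colors and the convex hull of their images contains `x`. -/
def IsRainbowBlock (y : V → E) (c : V → C) (x : E) (B : Finset V) : Prop :=
  Set.InjOn c B ∧ x ∈ convexHull ℝ (y '' B)

lemma IsRainbowBlock.insert [DecidableEq V] {B : Finset V} (hB : IsRainbowBlock y c x B) {v : V}
    (hv : ∀ w ∈ B, c w ≠ c v) : IsRainbowBlock y c x (insert v B) := by
  refine ⟨?_, convexHull_mono (Set.image_mono (by simp)) hB.2⟩
  rw [coe_insert, Set.injOn_insert fun h => hv v h rfl]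
  refine ⟨hB.1, ?_⟩
  rintro ⟨w, hw, hwv⟩
  exact hv w hw hwv

end ColoredBlock

section MoveVertex

open Finset

variable {V C : Type*} [DecidableEq V] {S : Finset V} {P : Finpartition S}

lemma exists_finpartition_move {B₀ B₁ : Finset V} (h₀ : B₀ ∈ P.parts) (h₁ : B₁ ∈ P.parts)
    (hne : B₁ ≠ B₀) {v : V} (hv : v ∈ B₀) (hB₀ : (B₀.erase v).Nonempty) :
    ∃ Q : Finpartition S, #Q.parts = #P.parts ∧ ∀ B ∈ Q.parts,
      B = B₀.erase v ∨ B = insert v B₁ ∨ B ∈ P.parts ∧ B ≠ B₀ := by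
  have hdisj : Disjoint B₀ B₁ := P.disjoint h₀ h₁ hne.symm
  have hdisj' : Disjoint (B₀.erase v) (insert v B₁) := by
    rw [disjoint_insert_right]
    exact ⟨notMem_erase v B₀, hdisj.mono_left (erase_subset v B₀)⟩
  have hp : {B₀, B₁} ⊆ P.parts := by simp [insert_subset_iff, h₀, h₁]
  let R : Finpartition (({B₀, B₁} : Finset (Finset V)).sup id) :=
    (Finpartition.indiscrete hB₀.ne_empty).extend (insert_ne_empty v B₁) hdisj' (by
      ext w; by_cases hw : w = v <;> simp [hw, hv])
  have hR : #R.parts = #{B₀, B₁} := by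
    rw [Finpartition.card_extend, Finpartition.indiscrete_parts, card_singleton,
      card_pair hne.symm]
  refine ⟨replaceParts P hp R, card_parts_replaceParts hp hR, fun B hB => ?_⟩
  simp only [replaceParts_parts, R, Finpartition.extend_parts, Finpartition.indiscrete_parts,
    mem_union, mem_insert, mem_singleton, mem_sdiff] at hB
  tauto

lemma exists_mem_parts_forall_ne_of_card_lt [DecidableEq C] {c : V → C} {j : C}
    (hj : #{v ∈ S | c v = j} < #P.parts) : ∃ B ∈ P.parts, ∀ v ∈ B, c v ≠ j := by
  by_contra! h
  refine hj.not_ge ((card_le_card fun B hB => ?_).trans (card_image_le (f := P.part)))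
  obtain ⟨v, hv, hvj⟩ := h B hB
  exact mem_image.2 ⟨v, by simpa [hvj] using P.subset hB hv, P.part_eq_of_mem hB hv⟩

lemma card_parts_lt_card_filter_add {m : ℕ} (hP : ∀ B ∈ P.parts, #B ≤ m)
    (hS : m * (#P.parts - 1) < #S) : #P.parts < #{B ∈ P.parts | #B = m} + m := by
  have hsum : #S + #P.parts ≤ #P.parts * m + #{B ∈ P.parts | #B = m} := by
    rw [← P.sum_card_parts, card_filter, card_eq_sum_ones, sum_mul, ← sum_add_distrib,
      ← sum_add_distrib]
    refine sum_le_sum fun B hB => ?_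
    have := hP B hB
    split_ifs <;> omega
  obtain hr | ⟨r, hr⟩ : #P.parts = 0 ∨ ∃ r, #P.parts = r + 1 := by
    cases #P.parts <;> simp
  · simp [← P.sum_card_parts, card_eq_zero.1 hr] at hS
  · rw [hr] at hS hsum ⊢
    rw [Nat.add_sub_cancel] at hS
    nlinarith

end MoveVertex

section Repair

open Finset Module

variable {V C E : Type*} [DecidableEq V] {S : Finset V} {P : Finpartition S}
  {c : V → C} {s : C}

lemma exists_mem_parts_forall_notMem_pair [DecidableEq C]
    (hs : ((S : Set V) ∩ c ⁻¹' {s}).Subsingleton) {B₀ : Finset V} (h₀ : B₀ ∈ P.parts)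
    (hB₀ : Set.SurjOn c B₀ Set.univ) {j : C} (hj : #{v ∈ S | c v = j} < #P.parts) :
    ∃ B₁ ∈ P.parts, B₁ ≠ B₀ ∧ ∀ w ∈ B₁, c w ∉ ({j, s} : Finset C) := by
  obtain ⟨B₁, h₁, hB₁⟩ := exists_mem_parts_forall_ne_of_card_lt hj
  obtain ⟨w₀, hw₀, hw₀s⟩ := hB₀ (Set.mem_univ s)
  have hne : B₁ ≠ B₀ := by
    rintro rfl
    obtain ⟨w, hw, hwj⟩ := hB₀ (Set.mem_univ j)
    exact hB₁ w hw hwj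
  refine ⟨B₁, h₁, hne, fun w hw => ?_⟩
  rw [mem_insert, mem_singleton, not_or]
  refine ⟨hB₁ w hw, fun hws => hne (P.eq_of_mem_parts h₁ h₀ hw ?_)⟩
  rwa [hs ⟨P.subset h₁ hw, hws⟩ ⟨P.subset h₀ hw₀, hw₀s⟩]

variable [Fintype C] [Nontrivial C]

/-- A block of full size `card C` has a superfluous vertex `v`, which is moved to a block avoiding
both the color `s` and another color, chosen so that `v` has one of these two colors. -/
lemma exists_finpartition_card_lt [DecidableEq C] [AddCommGroup E] [Module ℝ E]
    [FiniteDimensional ℝ E] {y : V → E} {x : E} (hC : Fintype.card C = finrank ℝ E + 2)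
    (hs : ((S : Set V) ∩ c ⁻¹' {s}).Subsingleton)
    (hc : ∀ j ≠ s, #{v ∈ S | c v = j} < #P.parts) (hP : ∀ B ∈ P.parts, IsRainbowBlock y c x B) :
    ∃ Q : Finpartition S, #Q.parts = #P.parts ∧
      ∀ B ∈ Q.parts, IsRainbowBlock y c x B ∧ #B < Fintype.card C := by
  by_cases! hfull : ∀ B ∈ P.parts, #B < Fintype.card C
  · exact ⟨P, rfl, fun B hB => ⟨hP B hB, hfull B hB⟩⟩
  obtain ⟨B₀, h₀, hB₀⟩ := hfull
  have hsurj : Set.SurjOn c B₀ Set.univ := by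
    simpa using surjOn_of_injOn_of_card_le (t := univ) c (by simp) (hP B₀ h₀).1 hB₀
  obtain ⟨v, hv, hxv⟩ := exists_mem_convexHull_image_erase (by omega) (hP B₀ h₀).2
  obtain ⟨j, hjs, hvj⟩ : ∃ j ≠ s, c v ∈ ({j, s} : Finset C) := by
    by_cases h : c v = s
    · obtain ⟨j, hj⟩ := exists_ne s
      exact ⟨j, hj, by simp [h]⟩
    · exact ⟨c v, h, by simp⟩
  obtain ⟨B₁, h₁, hne, hB₁⟩ := exists_mem_parts_forall_notMem_pair hs h₀ hsurj (hc j hjs)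
  obtain ⟨Q, hcard, hQ⟩ := exists_finpartition_move h₀ h₁ hne hv
    (by rw [← coe_nonempty]; exact Set.image_nonempty.1 (convexHull_nonempty_iff.1 ⟨x, hxv⟩))
  refine ⟨Q, hcard, fun B hB => ?_⟩
  rcases hQ B hB with rfl | rfl | ⟨hB, hBne⟩
  · have := card_add_card_le_card_of_injOn (T := ∅) (hP B₀ h₀).1 (by simp)
    exact ⟨⟨(hP B₀ h₀).1.mono (by simp), hxv⟩,
      (card_erase_lt_of_mem hv).trans_le (by simpa using this)⟩
  · have := card_add_card_le_card_of_injOn (hP B₁ h₁).1 hB₁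
    rw [card_pair hjs] at this
    exact ⟨(hP B₁ h₁).insert fun w hw hwv => hB₁ w hw (hwv ▸ hvj),
      (card_insert_le v B₁).trans_lt (by omega)⟩
  · obtain ⟨w₀, hw₀, hw₀s⟩ := hsurj (Set.mem_univ s)
    have := card_add_card_le_card_of_injOn (T := {s}) (hP B hB).1 fun w hw hws =>
      hBne (P.eq_of_mem_parts hB h₀ (hs ⟨P.subset hB hw, by simpa using hws⟩
        ⟨P.subset h₀ hw₀, hw₀s⟩ ▸ hw) hw₀)
    rw [card_singleton] at this
    exact ⟨hP B hB, by omega⟩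

/-- The color `s` is replaced by a color missing from the only block that uses `s`. -/
lemma exists_merge_injOn (hs : ((S : Set V) ∩ c ⁻¹' {s}).Subsingleton)
    (hP : ∀ B ∈ P.parts, Set.InjOn c B ∧ #B < Fintype.card C) :
    ∃ ρ : C → {j // j ≠ s}, ∀ B ∈ P.parts, Set.InjOn (ρ ∘ c) B := by
  obtain ⟨j₀, hj₀, hfree⟩ : ∃ j₀ ≠ s, ∀ B ∈ P.parts, (∃ v ∈ B, c v = s) → ∀ w ∈ B, c w ≠ j₀ := by
    by_cases! h : ∃ B ∈ P.parts, ∃ v ∈ B, c v = s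
    · obtain ⟨B, hB, v, hv, hvs⟩ := h
      obtain ⟨j, -, hj⟩ := exists_mem_notMem_of_card_lt_card (t := univ)
        (card_image_le.trans_lt (hP B hB).2)
      refine ⟨j, fun hjs => hj (hjs ▸ hvs ▸ mem_image_of_mem c hv), ?_⟩
      rintro B' hB' ⟨v', hv', hvs'⟩ w hw rfl
      obtain rfl := hs ⟨P.subset hB hv, hvs⟩ ⟨P.subset hB' hv', hvs'⟩
      obtain rfl := P.eq_of_mem_parts hB hB' hv hv'
      exact hj (mem_image_of_mem c hw)
    · obtain ⟨j, hj⟩ := exists_ne s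
      exact ⟨j, hj, fun B hB ⟨v, hv, hvs⟩ => absurd hvs (h B hB v hv)⟩
  refine ⟨fun j => if h : j = s then ⟨j₀, hj₀⟩ else ⟨j, h⟩, fun B hB a ha b hb hab => ?_⟩
  by_cases has : c a = s <;> by_cases hbs : c b = s <;>
    simp only [Function.comp_apply, has, hbs, dite_true, dite_false, Subtype.mk.injEq] at hab
  · exact hs ⟨P.subset hB ha, has⟩ ⟨P.subset hB hb, hbs⟩
  · exact absurd hab.symm (hfree B hB ⟨a, ha, has⟩ b hb)
  · exact absurd hab (hfree B hB ⟨b, hb, hbs⟩ a ha)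
  · exact (hP B hB).1 ha hb hab

end Repair

section RainbowPartition

open Finset Module

variable {V C κ E : Type*} [DecidableEq V] [NormedAddCommGroup E] [NormedSpace ℝ E]
  [FiniteDimensional ℝ E] {S : Finset V} {P : Finpartition S} {y : V → E} {x : E}

lemma exists_finpartition_ne [Fintype κ] [Nontrivial κ] (hκ : Fintype.card κ = finrank ℝ E + 1)
    {c : V → κ} (hy : ∀ B ∈ P.parts, affineSpan ℝ (y '' B) = ⊤)
    (hP : ∀ B ∈ P.parts, #B = Fintype.card κ ∧ IsRainbowBlock y c x B)
    (hcard : Fintype.card κ < #P.parts) :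
    ∃ Q : Finpartition S, Q ≠ P ∧ #Q.parts = #P.parts ∧
      ∀ B ∈ Q.parts, #B = Fintype.card κ ∧ IsRainbowBlock y c x B := by
  obtain ⟨e, hce, he⟩ := exists_enumeration_of_injOn fun B hB => ⟨(hP B hB).2.1, (hP B hB).1⟩
  have hrange : ∀ B, Set.range (fun j => y (e B j)) = y '' B.1 := fun B => by
    rw [← he B, coe_image, coe_univ, Set.image_univ, ← Set.range_comp]; rfl
  obtain ⟨k⟩ : Nonempty κ := inferInstance
  obtain ⟨σ, hσk, hσ1, hσ⟩ := exists_ne_one_forall_mem_convexHull hκ (by simpa using hcard) k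
    (u := fun B j => y (e B j)) (x := x) (fun B => by rw [hrange, hy B B.2])
    fun B => by rw [hrange]; exact (hP B B.2).2.2
  obtain ⟨Q, hQcard, hQ⟩ := exists_finpartition_shuffle hce he σ
  refine ⟨Q, ?_, hQcard, fun A hA => ?_⟩
  · rintro rfl
    exact hσ1 (eq_one_of_shuffle_eq he hσk fun B => hQ.superset (mem_image_of_mem _ (mem_univ B)))
  · obtain ⟨B, -, rfl⟩ := mem_image.1 (hQ.subset hA)
    have hleft : Function.LeftInverse c fun j => e (σ j B) j := fun j => hce (σ j B) j
    refine ⟨card_image_of_injective _ hleft.injective, ?_, ?_⟩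
    · rw [coe_image, coe_univ, Set.image_univ]
      exact hleft.rightInvOn_range.injOn
    · rw [coe_image, coe_univ, Set.image_univ, ← Set.range_comp]
      exact hσ B

lemma two_pow_le_card_rainbow_of_card_eq [Fintype κ] [Nontrivial κ]
    (hκ : Fintype.card κ = finrank ℝ E + 1) {c : V → κ}
    (hy : ∀ T : Finset V, #T = finrank ℝ E + 1 → affineSpan ℝ (y '' T) = ⊤)
    (hP : ∀ B ∈ P.parts, #B = Fintype.card κ ∧ IsRainbowBlock y c x B) :
    2 ^ (#P.parts - Fintype.card κ) ≤ #{Q : Finpartition S |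
      #Q.parts = #P.parts ∧ ∀ B ∈ Q.parts, #B = Fintype.card κ ∧ IsRainbowBlock y c x B} :=
  two_pow_le_card_finpartition
    (fun _ hQ => exists_finpartition_ne hκ (fun B hB => hy B ((hQ B hB).1.trans hκ)) hQ) P hP

/-- At least `#P.parts - finrank ℝ E` blocks of the repaired partition have size
`finrank ℝ E + 1`; only these are repartitioned. -/
theorem two_pow_le_card_rainbow_finpartition [Nontrivial E] [Fintype C] [DecidableEq C]
    (hC : Fintype.card C = finrank ℝ E + 2)
    (hy : ∀ T : Finset V, #T = finrank ℝ E + 1 → affineSpan ℝ (y '' T) = ⊤)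
    {c : V → C} {s : C} (hs : ((S : Set V) ∩ c ⁻¹' {s}).Subsingleton)
    (hc : ∀ j ≠ s, #{v ∈ S | c v = j} < #P.parts)
    (hS : (finrank ℝ E + 1) * (#P.parts - 1) < #S)
    (hP : ∀ B ∈ P.parts, IsRainbowBlock y c x B) :
    2 ^ (#P.parts - 2 * finrank ℝ E - 1) ≤ #{Q : Finpartition S |
      #Q.parts = #P.parts ∧ ∀ B ∈ Q.parts, IsRainbowBlock y c x B} := by
  have hE : 0 < finrank ℝ E := finrank_pos
  have : Nontrivial C := Fintype.one_lt_card_iff_nontrivial.1 (by omega)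
  have hκ : Fintype.card {j // j ≠ s} = finrank ℝ E + 1 := by
    rw [Fintype.card_subtype_compl, Fintype.card_subtype_eq]; omega
  have : Nontrivial {j // j ≠ s} := Fintype.one_lt_card_iff_nontrivial.1 (by omega)
  obtain ⟨P', hcard, hP'⟩ := exists_finpartition_card_lt hC hs hc hP
  obtain ⟨ρ, hρ⟩ := exists_merge_injOn hs fun B hB => ⟨(hP' B hB).1.1, (hP' B hB).2⟩
  let p : Finset (Finset V) := {B ∈ P'.parts | #B = finrank ℝ E + 1}
  have hp : #P'.parts < #p + (finrank ℝ E + 1) :=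
    card_parts_lt_card_filter_add (fun B hB => by have := (hP' B hB).2; omega) (hcard ▸ hS)
  have hsub : p ⊆ P'.parts := filter_subset _ _
  rw [← hcard]
  calc 2 ^ (#P'.parts - 2 * finrank ℝ E - 1) ≤ 2 ^ (#p - Fintype.card {j // j ≠ s}) :=
        Nat.pow_le_pow_right two_pos (by omega)
    _ ≤ #{Q : Finpartition (p.sup id) | #Q.parts = #p ∧
          ∀ B ∈ Q.parts, #B = Fintype.card {j // j ≠ s} ∧ IsRainbowBlock y (ρ ∘ c) x B} :=
      two_pow_le_card_rainbow_of_card_eq (P := P'.ofSubset hsub rfl) hκ hy fun B hB =>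
        ⟨(mem_filter.1 hB).2.trans hκ.symm, hρ B (hsub hB), (hP' B (hsub hB)).1.2⟩
    _ ≤ #{Q : Finpartition (p.sup id) | #Q.parts = #p ∧ ∀ B ∈ Q.parts, IsRainbowBlock y c x B} :=
      card_le_card <| monotone_filter_right _ fun Q _ hQ =>
        ⟨hQ.1, fun B hB => ⟨.of_comp (hQ.2 B hB).2.1, (hQ.2 B hB).2.2⟩⟩
    _ ≤ _ := (card_finpartition_sup_le hsub fun B hB => (hP' B (mem_sdiff.1 hB).1).1).trans <|
      card_le_card <| monotone_filter_right _ fun Q _ hQ => hQ.1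

end RainbowPartition

section TverbergCount

open Finset

lemma GenPos.affineSpan_image_eq_top {d : ℕ} (hd : 0 < d) {V : Type*} {y : V → Fin d → ℝ}
    (hy : Function.Injective y) (hgen : GenPos d (Set.range y)) {T : Finset V}
    (hT : #T = d + 1) : affineSpan ℝ (y '' T) = ⊤ := by
  have hcard : Fintype.card T = d - 1 + 2 := by rw [Fintype.card_coe]; omega
  have hind : AffineIndependent ℝ fun v : T => y v := by
    by_contra hdep
    rw [← finrank_vectorSpan_le_iff_not_affineIndependent ℝ _ hcard, ← direction_affineSpan]
      at hdep
    set A := affineSpan ℝ (Set.range fun v : T => y v)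
    obtain ⟨U, hU, hUcard⟩ := exists_subset_card_eq
      (show Module.finrank ℝ A.direction + 2 ≤ #(T.image y) by
        rw [card_image_of_injective T hy]; omega)
    refine hgen _ (by omega) U (fun z hz => ?_) hUcard ⟨A, rfl, fun z hz => ?_⟩
    · obtain ⟨v, -, rfl⟩ := mem_image.1 (hU hz)
      exact ⟨v, rfl⟩
    · obtain ⟨v, hv, rfl⟩ := mem_image.1 (hU hz)
      exact subset_affineSpan ℝ _ ⟨⟨v, hv⟩, rfl⟩
  have htop := hind.affineSpan_eq_top_iff_card_eq_finrank_add_one.2 (by simp [hT])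
  rwa [Set.image_eq_range]

lemma forall_card_filter_le_one_iff_injOn {V C : Type*} [DecidableEq C] {c : V → C}
    {B : Finset V} : (∀ j, #{v ∈ B | c v = j} ≤ 1) ↔ Set.InjOn c B := by
  simp only [card_le_one, mem_filter, and_imp]
  exact ⟨fun h v hv w hw hvw => h (c w) v hv hvw w hw rfl,
    fun h j v hv hvj w hw hwj => h hv hw (hvj.trans hwj.symm)⟩

variable {d N r : ℕ} {f : (Fin (N + 1) → ℝ) →ᵃ[ℝ] (Fin d → ℝ)} {c : Fin (N + 1) → Fin (d + 2)}

lemma tverbergCount_eq_card :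
    tverbergCount d N r f c = #{P : Finpartition (univ : Finset (Fin (N + 1))) |
      #P.parts = r ∧ ∃ x, ∀ B ∈ P.parts, IsRainbowBlock (fun i => f (Pi.single i 1)) c x B} := by
  rw [tverbergCount, ← Set.ncard_coe_finset, ← Set.ncard_image_of_injective _
    (fun P Q => Finpartition.ext : Function.Injective Finpartition.parts)]
  congr 1
  ext p
  simp only [forall_card_filter_le_one_iff_injOn]
  constructor
  · rintro ⟨hcard, hdisj, hunion, hinj, x, hx⟩
    have hbot : ∅ ∉ p := fun h => by simpa using hx ∅ h
    refine ⟨⟨p, supIndep_iff_pairwiseDisjoint.2 hdisj, ?_, hbot⟩, ?_, rfl⟩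
    · rw [sup_eq_biUnion, hunion]
    · simpa using ⟨hcard, x, fun B hB => ⟨hinj B hB, hx B hB⟩⟩
  · rintro ⟨P, hP, rfl⟩
    obtain ⟨hcard, x, hx⟩ : #P.parts = r ∧ ∃ x, ∀ B ∈ P.parts, IsRainbowBlock _ c x B := by
      simpa using hP
    exact ⟨hcard, P.disjoint, by rw [← sup_eq_biUnion, P.sup_parts], fun B hB => (hx B hB).1, x,
      fun B hB => (hx B hB).2⟩

theorem tverbergCount_lower_bound_of_pos_general (hd : 0 < d) (hN : (d + 1) * (r - 1) ≤ N)
    (hlast : #{i | c i = Fin.last (d + 1)} ≤ 1) (hc : ∀ j ≠ Fin.last (d + 1), #{i | c i = j} < r)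
    (hinj : Function.Injective fun i : Fin (N + 1) => f (Pi.single i 1))
    (hgen : GenPos d (Set.range fun i : Fin (N + 1) => f (Pi.single i 1)))
    (hpos : 0 < tverbergCount d N r f c) :
    2 ^ (r - 2 * d - 1) ≤ tverbergCount d N r f c := by
  have : Nonempty (Fin d) := ⟨⟨0, hd⟩⟩
  rw [tverbergCount_eq_card] at hpos ⊢
  obtain ⟨P, hP⟩ := card_pos.1 hpos
  obtain ⟨rfl, x, hx⟩ := (mem_filter.1 hP).2
  have hs : ((univ : Finset (Fin (N + 1))) ∩ c ⁻¹' {Fin.last (d + 1)} : Set _).Subsingleton := by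
    intro i hi j hj
    exact card_le_one.1 hlast i (by simpa using hi) j (by simpa using hj)
  have hle := two_pow_le_card_rainbow_finpartition (P := P) (by simp)
    (fun T hT => hgen.affineSpan_image_eq_top hd hinj (by simpa using hT)) hs hc
    (by simpa using Nat.lt_succ_of_le hN) hx
  rw [Module.finrank_fin_fun] at hle
  refine hle.trans (card_le_card fun Q hQ => ?_)
  simp only [mem_filter, mem_univ, true_and] at hQ ⊢
  exact ⟨hQ.1, x, hQ.2⟩

end TverbergCount

/-- For `d ≥ 2` and an arbitrary integer `r ≥ 2d + 2` (not necessarily prime), with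
`N = (d+1)(r-1)`: for any affine map `f` on the standard `N`-simplex whose vertices are
colored with `d + 2` colors with color classes `|C_0| = … = |C_d| = r - 1`, `|C_{d+1}| = 1`,
and whose `N + 1` vertex images are in general position, if `T(f) > 0` then
`T(f) ≥ 2^(r - 2d - 1)`. -/
theorem tverbergCount_lower_bound_of_pos (d r N : ℕ) (hd : 2 ≤ d) (hr : 2 * d + 2 ≤ r)
    (hN : N = (d + 1) * (r - 1))
    (f : (Fin (N + 1) → ℝ) →ᵃ[ℝ] (Fin d → ℝ))
    (c : Fin (N + 1) → Fin (d + 2))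
    (hc : ∀ j : Fin (d + 2),
      (Finset.univ.filter fun i => c i = j).card = if (j : ℕ) = d + 1 then 1 else r - 1)
    (hinj : Function.Injective fun i : Fin (N + 1) => f (Pi.single i 1))
    (hgen : GenPos d (Set.range fun i : Fin (N + 1) => f (Pi.single i 1)))
    (hpos : 0 < tverbergCount d N r f c) :
    2 ^ (r - 2 * d - 1) ≤ tverbergCount d N r f c := by
  have hlast : (Finset.univ.filter fun i => c i = Fin.last (d + 1)).card ≤ 1 := by simp [hc]
  have hlt (j) (hj : j ≠ Fin.last (d + 1)) : (Finset.univ.filter fun i => c i = j).card < r := by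
    rw [hc, if_neg fun h : j.1 = d + 1 => hj (Fin.ext h)]
    omega
  exact tverbergCount_lower_bound_of_pos_general (by omega) hN.ge hlast hlt hinj hgen hpos
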